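/- arXiv:math/0501186 — 2 statements merged into one kernel-verified Lean document; each statement's English description precedes it below -/
import Mathlib

section
/- For all natural numbers k and l and all x, z ∈ F: (-1)^l Σ_{j=0}^{l} [l choose j]_q x^{l-j} (A*_{k+j+1}(z)/[k+j+1]_q) q^{-kj - k(k+1)/2} + (-1)^k Σ_{j=0}^{k} [k choose j]_q x^{k-j} (A_{l+j+1}([1,-z,-x])/[l+j+1]_q) q^{j(j+1)/2 - k(l+j+1)} = a_0 (-x)^{k+l+1} / ([k+l+1]_q · [k+l choose k]_q). -/
open Finset

/-- The q-Pochhammer symbol `(a;q)_n = ∏_{j=0}^{n-1} (1 - a q^j)`. -/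
def qPoch {F : Type*} [Field F] (q a : F) (n : ℕ) : F :=
  ∏ j ∈ Finset.range n, (1 - a * q ^ j)

/-- The q-binomial coefficient `[n choose i]_q`, equal to 0 when `i > n`. -/
def qBinom {F : Type*} [Field F] (q : F) (n i : ℕ) : F :=
  if i ≤ n then qPoch q q n / (qPoch q q i * qPoch q q (n - i)) else 0

/-- The q-integer `[n]_q = (1-q^n)/(1-q)`. -/
def qInt {F : Type*} [Field F] (q : F) (n : ℕ) : F := (1 - q ^ n) / (1 - q)

/-- The q-dual sequence `a*_n = ∑_{i=0}^n (-1)^i [n choose i]_q q^{i(i-1)/2} a_i`. -/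
def qDual {F : Type*} [Field F] (q : F) (a : ℕ → F) (n : ℕ) : F :=
  ∑ i ∈ Finset.range (n + 1), (-1 : F) ^ i * qBinom q n i * q ^ (i.choose 2) * a i
/-- The q-factorial `[n]_q! = ∏_{j=1}^n [j]_q`. -/
def qFact {F : Type*} [Field F] (q : F) (n : ℕ) : F :=
  ∏ j ∈ Finset.range n, qInt q (j + 1)

/-- `[u,v,w]^n = ∑_{i+j+k=n} ([n]_q!/([i]_q![j]_q![k]_q!)) u^i v^j w^k`. -/
def qBracket3 {F : Type*} [Field F] (q : F) (n : ℕ) (u v w : F) : F :=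
  ∑ i ∈ Finset.range (n + 1), ∑ j ∈ Finset.range (n + 1 - i),
    qFact q n / (qFact q i * qFact q j * qFact q (n - i - j)) *
      (u ^ i * v ^ j * w ^ (n - i - j))

/-- `A_n(x) = ∑_{i=0}^n (-1)^i [n choose i]_q q^{i(i-1)/2} a_i x^{n-i}`. -/
def Apoly {F : Type*} [Field F] (q : F) (a : ℕ → F) (n : ℕ) (x : F) : F :=
  ∑ i ∈ Finset.range (n + 1), (-1 : F) ^ i * qBinom q n i * q ^ (i.choose 2) * a i * x ^ (n - i)

/-- `A*_n(x) = ∑_{i=0}^n (-1)^i [n choose i]_q a*_i x^{n-i}`. -/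
def AstarPoly {F : Type*} [Field F] (q : F) (a : ℕ → F) (n : ℕ) (x : F) : F :=
  ∑ i ∈ Finset.range (n + 1), (-1 : F) ^ i * qBinom q n i * qDual q a i * x ^ (n - i)

/-- `A_n([1,-z,-x]) = ∑_{i=0}^n (-1)^i [n choose i]_q q^{i(i-1)/2} a_i [1,-z,-x]^{n-i}`. -/
def ApolyTri {F : Type*} [Field F] (q : F) (a : ℕ → F) (n : ℕ) (z x : F) : F :=
  ∑ i ∈ Finset.range (n + 1), (-1 : F) ^ i * qBinom q n i * q ^ (i.choose 2) * a i *
    qBracket3 q (n - i) 1 (-z) (-x)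

section QCalculus

variable {F : Type*} [Field F] {q : F}

lemma one_sub_ne_zero_of_pow_ne_one (hq : ∀ m : ℕ, 0 < m → q ^ m ≠ 1) : 1 - q ≠ 0 := by
  have h := hq 1 one_pos
  rw [pow_one] at h
  exact sub_ne_zero.2 h.symm

lemma qInt_ne_zero (hq : ∀ m : ℕ, 0 < m → q ^ m ≠ 1) {n : ℕ} (hn : 0 < n) : qInt q n ≠ 0 :=
  div_ne_zero (sub_ne_zero.2 (hq n hn).symm) (one_sub_ne_zero_of_pow_ne_one hq)

lemma qFact_ne_zero (hq : ∀ m : ℕ, 0 < m → q ^ m ≠ 1) (n : ℕ) : qFact q n ≠ 0 :=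
  Finset.prod_ne_zero_iff.2 fun j _ => qInt_ne_zero hq j.succ_pos

lemma qFact_zero : qFact q 0 = 1 := Finset.prod_range_zero _

lemma qFact_succ (n : ℕ) : qFact q (n + 1) = qFact q n * qInt q (n + 1) :=
  Finset.prod_range_succ _ _

lemma qInt_add (m n : ℕ) : qInt q (m + n) = qInt q m + q ^ m * qInt q n := by
  unfold qInt
  rw [pow_add]
  ring

lemma qPoch_self_eq (hq : 1 - q ≠ 0) (n : ℕ) : qPoch q q n = (1 - q) ^ n * qFact q n := by
  unfold qPoch qFact qInt
  rw [← Finset.card_range n, ← Finset.prod_const, Finset.card_range, ← Finset.prod_mul_distrib]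
  refine Finset.prod_congr rfl fun j _ => ?_
  rw [mul_div_cancel₀ _ hq, pow_succ']

lemma qBinom_eq_qFact_div (hq : ∀ m : ℕ, 0 < m → q ^ m ≠ 1) {n i : ℕ} (hi : i ≤ n) :
    qBinom q n i = qFact q n / (qFact q i * qFact q (n - i)) := by
  have h := one_sub_ne_zero_of_pow_ne_one hq
  have hpow : (1 - q) ^ n = (1 - q) ^ i * (1 - q) ^ (n - i) := by
    rw [← pow_add, Nat.add_sub_cancel' hi]
  rw [qBinom, if_pos hi, qPoch_self_eq h, qPoch_self_eq h, qPoch_self_eq h, hpow,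
    mul_mul_mul_comm, mul_div_mul_left _ _ (mul_ne_zero (pow_ne_zero _ h) (pow_ne_zero _ h))]

lemma qBinom_zero_right (hq : ∀ m : ℕ, 0 < m → q ^ m ≠ 1) (n : ℕ) : qBinom q n 0 = 1 := by
  rw [qBinom_eq_qFact_div hq n.zero_le, qFact_zero, one_mul, Nat.sub_zero,
    div_self (qFact_ne_zero hq n)]

lemma qBinom_self (hq : ∀ m : ℕ, 0 < m → q ^ m ≠ 1) (n : ℕ) : qBinom q n n = 1 := by
  rw [qBinom_eq_qFact_div hq le_rfl, Nat.sub_self, qFact_zero, mul_one,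
    div_self (qFact_ne_zero hq n)]

lemma qBinom_of_lt {n i : ℕ} (h : n < i) : qBinom q n i = 0 := if_neg h.not_ge

lemma qBinom_add_left (hq : ∀ m : ℕ, 0 < m → q ^ m ≠ 1) (m n : ℕ) :
    qBinom q (m + n) m = qFact q (m + n) / (qFact q m * qFact q n) := by
  rw [qBinom_eq_qFact_div hq (Nat.le_add_right m n), Nat.add_sub_cancel_left]

/-- The `q`-Pascal rule weighting the lower-left neighbour. -/
lemma qBinom_succ_succ (hq : ∀ m : ℕ, 0 < m → q ^ m ≠ 1) {n j : ℕ} (hj : j ≤ n) :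
    qBinom q (n + 1) (j + 1) = qBinom q n (j + 1) + q ^ (n - j) * qBinom q n j := by
  obtain ⟨m, rfl⟩ := Nat.exists_eq_add_of_le hj
  rw [Nat.add_sub_cancel_left]
  rcases m with _ | m
  · simp [qBinom_self hq, qBinom_of_lt]
  have h1 := qBinom_add_left hq (j + 1) (m + 1)
  have h2 := qBinom_add_left hq (j + 1) m
  have h3 := qBinom_add_left hq j (m + 1)
  rw [show j + 1 + (m + 1) = j + (m + 1) + 1 by ring] at h1
  rw [show j + 1 + m = j + (m + 1) by ring] at h2
  rw [h1, h2, h3, qFact_succ (j + (m + 1)), qFact_succ j, qFact_succ m,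
    show j + (m + 1) + 1 = (m + 1) + (j + 1) by ring, qInt_add (m + 1) (j + 1)]
  have := qFact_ne_zero hq j
  have := qFact_ne_zero hq m
  have := qInt_ne_zero hq j.succ_pos
  have := qInt_ne_zero hq m.succ_pos
  field_simp

/-- The `q`-Pascal rule weighting the upper neighbour. -/
lemma qBinom_succ_succ' (hq : ∀ m : ℕ, 0 < m → q ^ m ≠ 1) {n j : ℕ} (hj : j ≤ n) :
    qBinom q (n + 1) (j + 1) = q ^ (j + 1) * qBinom q n (j + 1) + qBinom q n j := by
  obtain ⟨m, rfl⟩ := Nat.exists_eq_add_of_le hj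
  rcases m with _ | m
  · simp [qBinom_self hq, qBinom_of_lt]
  have h1 := qBinom_add_left hq (j + 1) (m + 1)
  have h2 := qBinom_add_left hq (j + 1) m
  have h3 := qBinom_add_left hq j (m + 1)
  rw [show j + 1 + (m + 1) = j + (m + 1) + 1 by ring] at h1
  rw [show j + 1 + m = j + (m + 1) by ring] at h2
  rw [h1, h2, h3, qFact_succ (j + (m + 1)), qFact_succ j, qFact_succ m,
    show j + (m + 1) + 1 = (j + 1) + (m + 1) by ring, qInt_add (j + 1) (m + 1)]
  have := qFact_ne_zero hq j
  have := qFact_ne_zero hq m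
  have := qInt_ne_zero hq j.succ_pos
  have := qInt_ne_zero hq m.succ_pos
  field_simp
  ring

lemma sum_qBinom_succ (hq : ∀ m : ℕ, 0 < m → q ^ m ≠ 1) (n : ℕ) (f : ℕ → F) :
    ∑ j ∈ Finset.range (n + 2), qBinom q (n + 1) j * f j =
      ∑ j ∈ Finset.range (n + 1), qBinom q n j * f j +
        ∑ j ∈ Finset.range (n + 1), qBinom q n j * (q ^ (n - j) * f (j + 1)) := by
  have h : ∑ j ∈ Finset.range (n + 1), qBinom q n j * f j =
      ∑ j ∈ Finset.range (n + 2), qBinom q n j * f j := by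
    rw [Finset.sum_range_succ _ (n + 1), qBinom_of_lt n.lt_succ_self, zero_mul, add_zero]
  rw [h, Finset.sum_range_succ' _ (n + 1), Finset.sum_range_succ' _ (n + 1),
    qBinom_zero_right hq, qBinom_zero_right hq, add_right_comm, ← Finset.sum_add_distrib]
  congr 1
  refine Finset.sum_congr rfl fun j hj => ?_
  rw [qBinom_succ_succ hq (Finset.mem_range_succ_iff.1 hj)]
  ring

lemma sum_qBinom_succ' (hq : ∀ m : ℕ, 0 < m → q ^ m ≠ 1) (n : ℕ) (f : ℕ → F) :
    ∑ j ∈ Finset.range (n + 2), qBinom q (n + 1) j * f j =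
      ∑ j ∈ Finset.range (n + 1), qBinom q n j * (q ^ j * f j) +
        ∑ j ∈ Finset.range (n + 1), qBinom q n j * f (j + 1) := by
  have h : ∑ j ∈ Finset.range (n + 1), qBinom q n j * (q ^ j * f j) =
      ∑ j ∈ Finset.range (n + 2), qBinom q n j * (q ^ j * f j) := by
    rw [Finset.sum_range_succ _ (n + 1), qBinom_of_lt n.lt_succ_self, zero_mul, add_zero]
  rw [h, Finset.sum_range_succ' _ (n + 1), Finset.sum_range_succ' _ (n + 1),
    qBinom_zero_right hq, qBinom_zero_right hq, add_right_comm, ← Finset.sum_add_distrib,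
    pow_zero, one_mul, one_mul]
  congr 1
  refine Finset.sum_congr rfl fun j hj => ?_
  rw [qBinom_succ_succ' hq (Finset.mem_range_succ_iff.1 hj)]
  ring

/-- The `q`-exponential generating function `∑ b_n t^n / [n]_q!`. -/
noncomputable def qExpGen (q : F) (b : ℕ → F) : PowerSeries F :=
  PowerSeries.mk fun n => b n / qFact q n

lemma qExpGen_injective (hq : ∀ m : ℕ, 0 < m → q ^ m ≠ 1) :
    Function.Injective (qExpGen q) := fun b c h => by
  funext n
  have hn := congrArg (PowerSeries.coeff n) h
  simpa only [qExpGen, PowerSeries.coeff_mk, div_left_inj' (qFact_ne_zero hq n)] using hn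

lemma qExpGen_mul (hq : ∀ m : ℕ, 0 < m → q ^ m ≠ 1) (b c : ℕ → F) :
    qExpGen q b * qExpGen q c =
      qExpGen q fun n => ∑ i ∈ Finset.range (n + 1), qBinom q n i * b i * c (n - i) := by
  ext n
  rw [PowerSeries.coeff_mul, Finset.Nat.sum_antidiagonal_eq_sum_range_succ_mk]
  simp only [qExpGen, PowerSeries.coeff_mk]
  rw [Finset.sum_div]
  refine Finset.sum_congr rfl fun i hi => ?_
  rw [qBinom_eq_qFact_div hq (Finset.mem_range_succ_iff.1 hi)]
  have := qFact_ne_zero hq n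
  have := qFact_ne_zero hq i
  have := qFact_ne_zero hq (n - i)
  field_simp

lemma qExpGen_qDual (hq : ∀ m : ℕ, 0 < m → q ^ m ≠ 1) (a : ℕ → F) :
    qExpGen q (qDual q a) =
      qExpGen q (fun i => (-1) ^ i * q ^ (i.choose 2) * a i) * qExpGen q fun _ => 1 := by
  rw [qExpGen_mul hq]
  congr 1
  funext n
  refine Finset.sum_congr rfl fun i _ => ?_
  ring

lemma qExpGen_neg_one_pow_mul_AstarPoly (hq : ∀ m : ℕ, 0 < m → q ^ m ≠ 1) (a : ℕ → F) (z : F) :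
    qExpGen q (fun n => (-1) ^ n * AstarPoly q a n z) =
      qExpGen q (qDual q a) * qExpGen q fun i => (-z) ^ i := by
  rw [qExpGen_mul hq]
  congr 1
  funext n
  rw [AstarPoly, Finset.mul_sum]
  refine Finset.sum_congr rfl fun i hi => ?_
  have hsign : (-1 : F) ^ n * (-1) ^ i = (-1) ^ (n - i) := by
    obtain ⟨m, rfl⟩ := Nat.exists_eq_add_of_le (Finset.mem_range_succ_iff.1 hi)
    rw [Nat.add_sub_cancel_left, pow_add, mul_right_comm, ← mul_pow]
    simp
  rw [neg_pow z, ← hsign]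
  ring

lemma qExpGen_qBracket3 (hq : ∀ m : ℕ, 0 < m → q ^ m ≠ 1) (u v w : F) :
    qExpGen q (fun n => qBracket3 q n u v w) =
      qExpGen q (fun i => u ^ i) * (qExpGen q (fun i => v ^ i) * qExpGen q fun i => w ^ i) := by
  rw [qExpGen_mul hq, qExpGen_mul hq]
  congr 1
  funext n
  refine Finset.sum_congr rfl fun i hi => ?_
  have hin := Finset.mem_range_succ_iff.1 hi
  rw [Finset.mul_sum, Nat.sub_add_comm hin]
  refine Finset.sum_congr rfl fun j hj => ?_
  rw [qBinom_eq_qFact_div hq hin, qBinom_eq_qFact_div hq (Finset.mem_range_succ_iff.1 hj)]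
  have := qFact_ne_zero hq i
  have := qFact_ne_zero hq j
  have := qFact_ne_zero hq (n - i)
  have := qFact_ne_zero hq (n - i - j)
  field_simp

lemma qExpGen_ApolyTri (hq : ∀ m : ℕ, 0 < m → q ^ m ≠ 1) (a : ℕ → F) (z x : F) :
    qExpGen q (fun n => ApolyTri q a n z x) =
      qExpGen q (fun i => (-1) ^ i * q ^ (i.choose 2) * a i) *
        qExpGen q fun n => qBracket3 q n 1 (-z) (-x) := by
  rw [qExpGen_mul hq]
  congr 1
  funext n
  refine Finset.sum_congr rfl fun i _ => ?_
  ring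

lemma ApolyTri_eq_sum_AstarPoly (hq : ∀ m : ℕ, 0 < m → q ^ m ≠ 1) (a : ℕ → F) (n : ℕ) (z x : F) :
    ApolyTri q a n z x = ∑ j ∈ Finset.range (n + 1),
      qBinom q n j * ((-1) ^ j * AstarPoly q a j z) * (-x) ^ (n - j) := by
  suffices h : qExpGen q (fun n => ApolyTri q a n z x) = qExpGen q fun n =>
      ∑ j ∈ Finset.range (n + 1), qBinom q n j * ((-1) ^ j * AstarPoly q a j z) * (-x) ^ (n - j) from
    congrFun (qExpGen_injective hq h) n
  rw [← qExpGen_mul hq (fun j => (-1) ^ j * AstarPoly q a j z) fun i => (-x) ^ i,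
    qExpGen_ApolyTri hq, qExpGen_qBracket3 hq, qExpGen_neg_one_pow_mul_AstarPoly hq,
    qExpGen_qDual hq]
  simp only [one_pow, mul_assoc]

/-- The first sum of the reciprocity formula, for an arbitrary sequence `u`. -/
def dualSum (q : F) (u : ℕ → F) (x : F) (k l : ℕ) : F :=
  (-1 : F) ^ l * ∑ j ∈ Finset.range (l + 1), qBinom q l j * x ^ (l - j) * u (k + j + 1) *
    q ^ (-(k : ℤ) * (j : ℤ) - ((k + 1).choose 2 : ℤ))

/-- The second sum of the reciprocity formula, for an arbitrary sequence `u`. -/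
def primalSum (q : F) (u : ℕ → F) (x : F) (k l : ℕ) : F :=
  (-1 : F) ^ k * ∑ j ∈ Finset.range (k + 1), qBinom q k j * x ^ (k - j) * u (l + j + 1) *
    q ^ (((j + 1).choose 2 : ℤ) - (k : ℤ) * ((l : ℤ) + j + 1))

lemma dualSum_recurrence (hq0 : q ≠ 0) (hq : ∀ m : ℕ, 0 < m → q ^ m ≠ 1) (u : ℕ → F) (x : F)
    (k l : ℕ) :
    dualSum q u x k (l + 1) + q ^ (l + 1) * dualSum q u x (k + 1) l = -x * dualSum q u x k l := by
  have h := sum_qBinom_succ hq l fun j => x ^ (l + 1 - j) * u (k + j + 1) *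
    q ^ (-(k : ℤ) * (j : ℤ) - ((k + 1).choose 2 : ℤ))
  have h1 : ∑ j ∈ Finset.range (l + 1), qBinom q l j * (x ^ (l + 1 - j) * u (k + j + 1) *
      q ^ (-(k : ℤ) * (j : ℤ) - ((k + 1).choose 2 : ℤ))) =
      x * ∑ j ∈ Finset.range (l + 1), qBinom q l j * x ^ (l - j) * u (k + j + 1) *
        q ^ (-(k : ℤ) * (j : ℤ) - ((k + 1).choose 2 : ℤ)) := by
    rw [Finset.mul_sum]
    refine Finset.sum_congr rfl fun j hj => ?_
    rw [Nat.sub_add_comm (Finset.mem_range_succ_iff.1 hj), pow_succ]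
    ring
  have h2 : ∑ j ∈ Finset.range (l + 1), qBinom q l j * (q ^ (l - j) *
      (x ^ (l + 1 - (j + 1)) * u (k + (j + 1) + 1) *
        q ^ (-(k : ℤ) * ((j + 1 : ℕ) : ℤ) - ((k + 1).choose 2 : ℤ)))) =
      q ^ (l + 1) * ∑ j ∈ Finset.range (l + 1), qBinom q l j * x ^ (l - j) * u (k + 1 + j + 1) *
        q ^ (-((k + 1 : ℕ) : ℤ) * (j : ℤ) - ((k + 1 + 1).choose 2 : ℤ)) := by
    rw [Finset.mul_sum]
    refine Finset.sum_congr rfl fun j hj => ?_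
    have hpow : q ^ (l - j) * q ^ (-(k : ℤ) * ((j + 1 : ℕ) : ℤ) - ((k + 1).choose 2 : ℤ)) =
        q ^ (l + 1) * q ^ (-((k + 1 : ℕ) : ℤ) * (j : ℤ) - ((k + 1 + 1).choose 2 : ℤ)) := by
      rw [← zpow_natCast, ← zpow_natCast, ← zpow_add₀ hq0, ← zpow_add₀ hq0,
        Nat.choose_succ_succ' (k + 1) 1, Nat.choose_one_right,
        Nat.cast_sub (Finset.mem_range_succ_iff.1 hj)]
      congr 1
      push_cast
      ring
    rw [Nat.add_sub_add_right, show k + (j + 1) + 1 = k + 1 + j + 1 by ring]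
    linear_combination (qBinom q l j * x ^ (l - j) * u (k + 1 + j + 1)) * hpow
  rw [h1, h2] at h
  simp only [← mul_assoc (qBinom q _ _)] at h
  unfold dualSum
  rw [h, pow_succ (-1 : F)]
  ring

lemma primalSum_recurrence (hq0 : q ≠ 0) (hq : ∀ m : ℕ, 0 < m → q ^ m ≠ 1) (u : ℕ → F) (x : F)
    (k l : ℕ) :
    primalSum q u x k (l + 1) + q ^ (l + 1) * primalSum q u x (k + 1) l =
      -x * primalSum q u x k l := by
  have h := sum_qBinom_succ' hq k fun j => x ^ (k + 1 - j) * u (l + j + 1) *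
    q ^ (((j + 1).choose 2 : ℤ) - ((k + 1 : ℕ) : ℤ) * ((l : ℤ) + j + 1))
  have h1 : q ^ (l + 1) * ∑ j ∈ Finset.range (k + 1), qBinom q k j * (q ^ j *
      (x ^ (k + 1 - j) * u (l + j + 1) *
        q ^ (((j + 1).choose 2 : ℤ) - ((k + 1 : ℕ) : ℤ) * ((l : ℤ) + j + 1)))) =
      x * ∑ j ∈ Finset.range (k + 1), qBinom q k j * x ^ (k - j) * u (l + j + 1) *
        q ^ (((j + 1).choose 2 : ℤ) - (k : ℤ) * ((l : ℤ) + j + 1)) := by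
    rw [Finset.mul_sum, Finset.mul_sum]
    refine Finset.sum_congr rfl fun j hj => ?_
    have hpow : q ^ (l + 1) * q ^ j *
        q ^ (((j + 1).choose 2 : ℤ) - ((k + 1 : ℕ) : ℤ) * ((l : ℤ) + j + 1)) =
        q ^ (((j + 1).choose 2 : ℤ) - (k : ℤ) * ((l : ℤ) + j + 1)) := by
      rw [← zpow_natCast, ← zpow_natCast, ← zpow_add₀ hq0, ← zpow_add₀ hq0]
      congr 1
      push_cast
      ring
    rw [Nat.sub_add_comm (Finset.mem_range_succ_iff.1 hj), pow_succ x]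
    linear_combination (qBinom q k j * x ^ (k - j) * x * u (l + j + 1)) * hpow
  have h2 : q ^ (l + 1) * ∑ j ∈ Finset.range (k + 1), qBinom q k j *
      (x ^ (k + 1 - (j + 1)) * u (l + (j + 1) + 1) *
        q ^ (((j + 1 + 1).choose 2 : ℤ) -
          ((k + 1 : ℕ) : ℤ) * ((l : ℤ) + ((j + 1 : ℕ) : ℤ) + 1))) =
      ∑ j ∈ Finset.range (k + 1), qBinom q k j * x ^ (k - j) * u (l + 1 + j + 1) *
        q ^ (((j + 1).choose 2 : ℤ) - (k : ℤ) * (((l + 1 : ℕ) : ℤ) + j + 1)) := by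
    rw [Finset.mul_sum]
    refine Finset.sum_congr rfl fun j _ => ?_
    have hpow : q ^ (l + 1) * q ^ (((j + 1 + 1).choose 2 : ℤ) -
          ((k + 1 : ℕ) : ℤ) * ((l : ℤ) + ((j + 1 : ℕ) : ℤ) + 1)) =
        q ^ (((j + 1).choose 2 : ℤ) - (k : ℤ) * (((l + 1 : ℕ) : ℤ) + j + 1)) := by
      rw [← zpow_natCast, ← zpow_add₀ hq0, Nat.choose_succ_succ' (j + 1) 1, Nat.choose_one_right]
      congr 1
      push_cast
      ring
    rw [Nat.add_sub_add_right, show l + (j + 1) + 1 = l + 1 + j + 1 by ring]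
    linear_combination (qBinom q k j * x ^ (k - j) * u (l + 1 + j + 1)) * hpow
  simp only [← mul_assoc (qBinom q (k + 1) _)] at h
  unfold primalSum
  rw [h, ← h2, pow_succ (-1 : F)]
  linear_combination (-(-1) ^ k) * h1

lemma reciprocal_qBinom_recurrence (hq : ∀ m : ℕ, 0 < m → q ^ m ≠ 1) (k l : ℕ) :
    1 / (qInt q (k + (l + 1) + 1) * qBinom q (k + (l + 1)) k) +
        q ^ (l + 1) * (1 / (qInt q (k + 1 + l + 1) * qBinom q (k + 1 + l) (k + 1))) =
      1 / (qInt q (k + l + 1) * qBinom q (k + l) k) := by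
  rw [qBinom_add_left hq, qBinom_add_left hq, qBinom_add_left hq,
    show k + (l + 1) = k + l + 1 by ring, show k + 1 + l = k + l + 1 by ring,
    qFact_succ (k + l), qFact_succ k, qFact_succ l]
  have hadd := qInt_add (q := q) (l + 1) (k + 1)
  rw [show l + 1 + (k + 1) = k + l + 1 + 1 by ring] at hadd
  have := qFact_ne_zero hq k
  have := qFact_ne_zero hq l
  have := qFact_ne_zero hq (k + l)
  have := qInt_ne_zero hq (k + l).succ_pos
  have := qInt_ne_zero hq (k + l + 1).succ_pos
  have := qInt_ne_zero hq k.succ_pos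
  have := qInt_ne_zero hq l.succ_pos
  field_simp
  linear_combination -hadd

lemma qBinom_succ_succ_div (hq : ∀ m : ℕ, 0 < m → q ^ m ≠ 1) {n j : ℕ} (hj : j ≤ n) :
    qBinom q (n + 1) (j + 1) / qInt q (n + 1) = qBinom q n j / qInt q (j + 1) := by
  rw [qBinom_eq_qFact_div hq hj, qBinom_eq_qFact_div hq (Nat.add_le_add_right hj 1),
    Nat.add_sub_add_right, qFact_succ, qFact_succ]
  have := qFact_ne_zero hq j
  have := qFact_ne_zero hq (n - j)
  have := qInt_ne_zero hq j.succ_pos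
  have := qInt_ne_zero hq n.succ_pos
  field_simp

lemma dualSum_add_primalSum_zero (hq : ∀ m : ℕ, 0 < m → q ^ m ≠ 1) (a : ℕ → F) (x z : F) (l : ℕ) :
    dualSum q (fun n => AstarPoly q a n z / qInt q n) x 0 l +
        primalSum q (fun n => ApolyTri q a n z x / qInt q n) x 0 l =
      a 0 * (-x) ^ (l + 1) / qInt q (l + 1) := by
  have hstar : AstarPoly q a 0 z = a 0 := by
    simp [AstarPoly, qDual, qBinom_self hq]
  have hdual : dualSum q (fun n => AstarPoly q a n z / qInt q n) x 0 l =
      -(∑ j ∈ Finset.range (l + 1), qBinom q (l + 1) (j + 1) *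
        ((-1) ^ (j + 1) * AstarPoly q a (j + 1) z) * (-x) ^ (l + 1 - (j + 1))) /
          qInt q (l + 1) := by
    rw [dualSum, Finset.mul_sum, neg_div, Finset.sum_div, ← Finset.sum_neg_distrib]
    refine Finset.sum_congr rfl fun j hj => ?_
    have hjl := Finset.mem_range_succ_iff.1 hj
    have hdiv := qBinom_succ_succ_div hq hjl
    have hsign : (-1 : F) ^ l = (-1) ^ j * (-1) ^ (l - j) := by
      rw [← pow_add, Nat.add_sub_cancel' hjl]
    rw [Nat.add_sub_add_right, neg_pow x, pow_succ (-1 : F) j, hsign]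
    simp only [Nat.cast_zero, neg_zero, zero_mul, zero_add, zero_sub,
      Nat.choose_eq_zero_of_lt one_lt_two, zpow_zero, mul_one]
    linear_combination
      (-((-1) ^ j * (-1) ^ (l - j) * x ^ (l - j) * AstarPoly q a (j + 1) z)) * hdiv
  have hprimal : primalSum q (fun n => ApolyTri q a n z x / qInt q n) x 0 l =
      ApolyTri q a (l + 1) z x / qInt q (l + 1) := by
    simp [primalSum, qBinom_self hq]
  rw [hdual, hprimal, ApolyTri_eq_sum_AstarPoly hq, Finset.sum_range_succ' _ (l + 1),
    qBinom_zero_right hq, hstar, Nat.sub_zero, pow_zero, one_mul, one_mul]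
  rw [add_div, neg_div, neg_add_cancel_left]

lemma dualSum_add_primalSum (hq0 : q ≠ 0) (hq : ∀ m : ℕ, 0 < m → q ^ m ≠ 1) (a : ℕ → F) (x z : F)
    (k l : ℕ) :
    dualSum q (fun n => AstarPoly q a n z / qInt q n) x k l +
        primalSum q (fun n => ApolyTri q a n z x / qInt q n) x k l =
      a 0 * (-x) ^ (k + l + 1) / (qInt q (k + l + 1) * qBinom q (k + l) k) := by
  induction k generalizing l with
  | zero =>
    simpa only [Nat.zero_add, qBinom_zero_right hq, mul_one] using
      dualSum_add_primalSum_zero hq a x z l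
  | succ k ih =>
    have hd := dualSum_recurrence hq0 hq (fun n => AstarPoly q a n z / qInt q n) x k l
    have hp := primalSum_recurrence hq0 hq (fun n => ApolyTri q a n z x / qInt q n) x k l
    have hr := reciprocal_qBinom_recurrence hq k l
    have ih0 := ih l
    have ih1 := ih (l + 1)
    refine mul_left_cancel₀ (pow_ne_zero (l + 1) hq0) ?_
    rw [div_eq_mul_one_div] at ih0 ih1 ⊢
    rw [show k + (l + 1) + 1 = k + l + 2 by ring] at ih1 hr
    rw [show k + 1 + l + 1 = k + l + 2 by ring] at hr ⊢
    rw [pow_succ (-x) (k + l + 1)] at ih1 ⊢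
    linear_combination hd + hp - ih1 - x * ih0 - a 0 * (-x) ^ (k + l + 1) * (-x) * hr

end QCalculus

theorem stmt3 {F : Type*} [Field F] (q : F) (hq0 : q ≠ 0)
    (hq : ∀ m : ℕ, 0 < m → q ^ m ≠ 1) (a : ℕ → F) (k l : ℕ) (x z : F) :
    (-1 : F) ^ l * ∑ j ∈ Finset.range (l + 1), qBinom q l j * x ^ (l - j) *
        (AstarPoly q a (k + j + 1) z / qInt q (k + j + 1)) *
        q ^ (-(k : ℤ) * (j : ℤ) - ((k + 1).choose 2 : ℤ)) +
      (-1 : F) ^ k * ∑ j ∈ Finset.range (k + 1), qBinom q k j * x ^ (k - j) *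
        (ApolyTri q a (l + j + 1) z x / qInt q (l + j + 1)) *
        q ^ (((j + 1).choose 2 : ℤ) - (k : ℤ) * ((l : ℤ) + j + 1)) =
    a 0 * (-x) ^ (k + l + 1) / (qInt q (k + l + 1) * qBinom q (k + l) k) :=
  dualSum_add_primalSum hq0 hq a x z k l
end

section
/- For every natural number n and every x ∈ F: Σ_{i=0}^n (-1)^i [n choose i]_q q^{i(i-1)/2} a_i [1,-x]^{n-i} = (-1)^n Σ_{i=0}^n (-1)^i [n choose i]_q a*_i x^{n-i}, where [1,-x]^m = Σ_{s=0}^m [m choose s]_q (-x)^{m-s}. In other words, A_n([1,-x]) = (-1)^n A*_n(x). -/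
open Finset

/-- `[x,y]^m = ∑_{s=0}^m [m choose s]_q x^s y^{m-s}`. -/
def qBracket2 {F : Type*} [Field F] (q : F) (m : ℕ) (x y : F) : F :=
  ∑ s ∈ Finset.range (m + 1), qBinom q m s * x ^ s * y ^ (m - s)

lemma qPoch_self_ne_zero {F : Type*} [Field F] {q : F}
    (hq : ∀ m : ℕ, 0 < m → q ^ m ≠ 1) (n : ℕ) : qPoch q q n ≠ 0 := by
  refine Finset.prod_ne_zero_iff.2 fun j _ h => hq (j + 1) j.succ_pos ?_
  rw [pow_succ']
  exact (sub_eq_zero.1 h).symm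

/-- The q-analogue of `Nat.choose_mul`. -/
lemma qBinom_mul_qBinom_sub {F : Type*} [Field F] {q : F}
    (hq : ∀ m : ℕ, 0 < m → q ^ m ≠ 1) {n i j : ℕ} (hij : i ≤ j) (hjn : j ≤ n) :
    qBinom q n i * qBinom q (n - i) (j - i) = qBinom q n j * qBinom q j i := by
  have h := qPoch_self_ne_zero hq
  have hsub : n - i - (j - i) = n - j := by omega
  rw [qBinom, qBinom, qBinom, qBinom, if_pos (hij.trans hjn), if_pos (by omega), if_pos hjn,
    if_pos hij, hsub]
  field_simp [h n, h i, h j, h (n - i), h (j - i), h (n - j)]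

theorem stmt14 {F : Type*} [Field F] (q : F) (hq0 : q ≠ 0)
    (hq : ∀ m : ℕ, 0 < m → q ^ m ≠ 1) (a : ℕ → F) (n : ℕ) (x : F) :
    ∑ i ∈ Finset.range (n + 1), (-1 : F) ^ i * qBinom q n i * q ^ (i.choose 2) *
        a i * qBracket2 q (n - i) 1 (-x) =
    (-1 : F) ^ n * ∑ i ∈ Finset.range (n + 1), (-1 : F) ^ i * qBinom q n i *
        qDual q a i * x ^ (n - i) := by
  simp only [qBracket2, qDual, Finset.mul_sum, Finset.sum_mul]
  have hreindex : ∀ i ∈ Finset.range (n + 1),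
      ∑ s ∈ Finset.range (n - i + 1), (-1 : F) ^ i * qBinom q n i * q ^ (i.choose 2) *
        a i * (qBinom q (n - i) s * 1 ^ s * (-x) ^ (n - i - s)) =
      ∑ j ∈ Finset.Ico i (n + 1), (-1 : F) ^ n * ((-1 : F) ^ j * qBinom q n j *
        ((-1 : F) ^ i * qBinom q j i * q ^ (i.choose 2) * a i) * x ^ (n - j)) := by
    intro i hi
    have hin : i ≤ n := Nat.lt_succ_iff.1 (Finset.mem_range.1 hi)
    rw [Finset.sum_Ico_eq_sum_range, Nat.sub_add_comm hin]
    refine Finset.sum_congr rfl fun s hs => ?_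
    have hsn : i + s ≤ n := by
      have := Finset.mem_range.1 hs
      omega
    have hmul := qBinom_mul_qBinom_sub hq (Nat.le_add_right i s) hsn
    rw [Nat.add_sub_cancel_left] at hmul
    have hsign : (-1 : F) ^ n * (-1) ^ (i + s) = (-1) ^ (n - (i + s)) := by
      nth_rewrite 1 [← Nat.sub_add_cancel hsn]
      rw [pow_add, mul_assoc, ← mul_pow, neg_one_mul, neg_neg, one_pow, mul_one]
    rw [Nat.sub_sub, neg_pow x, one_pow, ← hsign]
    linear_combination (-1 : F) ^ i * q ^ (i.choose 2) * a i * (-1 : F) ^ n *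
      (-1) ^ (i + s) * x ^ (n - (i + s)) * hmul
  rw [Finset.sum_congr rfl hreindex]
  refine Finset.sum_comm' fun i j => ?_
  simp only [Finset.mem_range, Finset.mem_Ico]
  omega
end
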